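/- Let X be a compact Hausdorff, locally connected, connected topological space, A ⊆ X a nonempty closed subset, and f : X → ℝ continuous. Let U₀ be the set of points of X \ A that are local minima of f, and assume that U₀ is nonempty and that for every x ∈ U₀ the set Λ(x) = {λ > f(x) : the connected component of x in {f < λ} is disjoint from A} is nonempty (it is then automatically bounded above). For x ∈ U₀ put λ(x) = sup Λ(x) and let C(x) be the connected component of x in {f < λ(x)}, and let 𝒞 = {C(x) : x ∈ U₀}. Assume: (A1) there exists x* ∈ U₀ such that for every x ∈ U₀ with C(x) ≠ C(x*), sup_{cl C(x)} f − min_{cl C(x)} f < sup_{cl C(x*)} f − min_{cl C(x*)} f, where cl denotes closure; (A2) cl C(x*) ∩ A ≠ ∅; (A3) every point of cl C(x*) ∩ A minimizes f over A. Then: min_X f < min_A f, the minimum of f over C(x*) equals min_X f, and the set of minimizers of f over C(x*) coincides with the set of global minimizers of f over X. (This is Lemma 3.13 of the paper: under (A1), (A2), (A3) one has argmin_{C₁} f = argmin over the whole domain, and the global minimum of f lies strictly below min_{∂Ω} f; here X plays the role of the closure of Ω and A of its boundary ∂Ω.) -/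

import Mathlib

/-!
If `z ∈ A` lies on the boundary of the well `C(x*)`, then `f z = λ(x*)`, since a smaller value would
put `z` inside the well, which is disjoint from `A`. By (A3) this value is `min_A f`, so it exceeds
the global minimum. A global minimizer `m` therefore lies outside `A` and cannot be joined to `A`
below the level `λ(x*)`: hence `λ(x*) ≤ λ(m)`. In a connected space, the supremum of `f` over the
closure of a well is the level defining the well, so the well of `m` is at least as deep as `C(x*)`.
By (A1) the two wells coincide, which means `m ∈ C(x*)`.
-/

open Set

section ConnectedComponentIn

variable {X : Type*} [TopologicalSpace X]

lemma mem_connectedComponentIn_of_mem_closure {U : Set X} {x y : X}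
    (hy : y ∈ closure (connectedComponentIn U x)) (hyU : y ∈ U) :
    y ∈ connectedComponentIn U x := by
  have hx : x ∈ connectedComponentIn U x :=
    mem_connectedComponentIn (connectedComponentIn_nonempty_iff.1 (closure_nonempty_iff.1 ⟨y, hy⟩))
  have hpre : IsPreconnected (insert y (connectedComponentIn U x)) :=
    isPreconnected_connectedComponentIn.subset_closure (subset_insert _ _)
      (insert_subset hy subset_closure)
  exact hpre.subset_connectedComponentIn (mem_insert_of_mem y hx)
    (insert_subset hyU (connectedComponentIn_subset U x)) (mem_insert y _)

lemma connectedComponentIn_iUnion_of_directed [LocallyConnectedSpace X] {ι : Type*}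
    {U : ι → Set X} (hU : ∀ i, IsOpen (U i)) (hdir : Directed (· ⊆ ·) U) (x : X) :
    connectedComponentIn (⋃ i, U i) x = ⋃ i, connectedComponentIn (U i) x := by
  refine Subset.antisymm ?_
    (iUnion_subset fun i => connectedComponentIn_mono x (subset_iUnion U i))
  by_cases hx : x ∈ ⋃ i, U i
  swap
  · simp only [connectedComponentIn_eq_empty hx, empty_subset]
  obtain ⟨i₀, hi₀⟩ := mem_iUnion.1 hx
  refine isPreconnected_connectedComponentIn.subset_of_closure_inter_subset
    (isOpen_iUnion fun i => (hU i).connectedComponentIn)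
    ⟨x, mem_connectedComponentIn hx, mem_iUnion.2 ⟨i₀, mem_connectedComponentIn hi₀⟩⟩ ?_
  rintro y ⟨hy_closure, hy⟩
  obtain ⟨i, hyi⟩ := mem_iUnion.1 (connectedComponentIn_subset _ _ hy)
  obtain ⟨w, hwy, hwx⟩ :=
    mem_closure_iff.1 hy_closure _ (hU i).connectedComponentIn (mem_connectedComponentIn hyi)
  obtain ⟨j, hwx⟩ := mem_iUnion.1 hwx
  obtain ⟨k, hik, hjk⟩ := hdir i j
  have hcomp : connectedComponentIn (U k) x = connectedComponentIn (U k) y :=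
    (connectedComponentIn_eq (connectedComponentIn_mono x hjk hwx)).trans
      (connectedComponentIn_eq (connectedComponentIn_mono y hik hwy)).symm
  exact mem_iUnion.2 ⟨k, hcomp ▸ mem_connectedComponentIn (hik hyi)⟩

end ConnectedComponentIn

section Sublevel

variable {X β : Type*} [TopologicalSpace X] [LinearOrder β] [TopologicalSpace β]
  [OrderClosedTopology β] {f : X → β} {x y : X} {l : β}

lemma le_of_mem_closure_connectedComponentIn (hf : Continuous f)
    (hy : y ∈ closure (connectedComponentIn {w | f w < l} x)) : f y ≤ l :=
  closure_lt_subset_le hf continuous_const (closure_mono (connectedComponentIn_subset _ _) hy)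

lemma isGreatest_image_closure_connectedComponentIn [LocallyConnectedSpace X]
    [PreconnectedSpace X] (hf : Continuous f) (hx : f x < l)
    (hne : connectedComponentIn {w | f w < l} x ≠ univ) :
    IsGreatest (f '' closure (connectedComponentIn {w | f w < l} x)) l := by
  refine ⟨?_, forall_mem_image.2 fun y hy => le_of_mem_closure_connectedComponentIn hf hy⟩
  by_contra hl
  have hclosed : IsClosed (connectedComponentIn {w | f w < l} x) :=
    isClosed_of_closure_subset fun y hy =>
      mem_connectedComponentIn_of_mem_closure hy <|
        (le_of_mem_closure_connectedComponentIn hf hy).lt_of_ne fun h => hl ⟨y, hy, h⟩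
  have hopen : IsOpen (connectedComponentIn {w | f w < l} x) :=
    (isOpen_lt hf continuous_const).connectedComponentIn
  exact hne (IsClopen.eq_univ ⟨hclosed, hopen⟩ ⟨x, mem_connectedComponentIn hx⟩)

end Sublevel

section Well

variable {X β : Type*} [TopologicalSpace X] [ConditionallyCompleteLinearOrder β]

/-- The set `Λ(x)` of levels above `f x` below which `x` cannot be joined to `A`. -/
def confinedLevels (f : X → β) (A : Set X) (x : X) : Set β :=
  {l | f x < l ∧ connectedComponentIn {y | f y < l} x ∩ A = ∅}

/-- The level `λ(x)` up to which `x` stays separated from `A`. It is a junk value when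
`confinedLevels f A x` is empty or unbounded. -/
noncomputable def escapeLevel (f : X → β) (A : Set X) (x : X) : β :=
  sSup (confinedLevels f A x)

/-- The well `C(x)` of `x`: its connected component strictly below its escape level. -/
def well (f : X → β) (A : Set X) (x : X) : Set X :=
  connectedComponentIn {y | f y < escapeLevel f A x} x

variable {f : X → β} {A : Set X} {x y : X} {l : β}

lemma mem_confinedLevels_of_forall_le (hx : f x < l) (hA : ∀ a ∈ A, l ≤ f a) :
    l ∈ confinedLevels f A x :=
  ⟨hx, disjoint_iff_inter_eq_empty.1 <| disjoint_left.2 fun a ha haA =>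
    have hal : f a < l := connectedComponentIn_subset {y | f y < l} x ha
    (hA a haA).not_gt hal⟩

lemma bddAbove_confinedLevels [PreconnectedSpace X] (hf : BddAbove (range f)) (hA : A.Nonempty)
    (x : X) : BddAbove (confinedLevels f A x) := by
  obtain ⟨M, hM⟩ := hf
  refine ⟨M, fun l ⟨_, hl⟩ => ?_⟩
  by_contra! hMl
  have huniv : {y | f y < l} = univ :=
    eq_univ_of_forall fun y => (hM (mem_range_self y)).trans_lt hMl
  rw [huniv, connectedComponentIn_univ, PreconnectedSpace.connectedComponent_eq_univ,
    univ_inter] at hl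
  exact hA.ne_empty hl

lemma lt_escapeLevel (hbdd : BddAbove (confinedLevels f A x))
    (hne : (confinedLevels f A x).Nonempty) : f x < escapeLevel f A x := by
  obtain ⟨l, hl⟩ := hne
  exact hl.1.trans_le (le_csSup hbdd hl)

lemma mem_well (hx : f x < escapeLevel f A x) : x ∈ well f A x :=
  mem_connectedComponentIn hx

variable [TopologicalSpace β] [OrderClosedTopology β]

lemma disjoint_well [LocallyConnectedSpace X] (hf : Continuous f)
    (hne : (confinedLevels f A x).Nonempty) : Disjoint (well f A x) A := by
  let U : confinedLevels f A x → Set X := fun l => {y | f y < l}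
  have hopen : ∀ l, IsOpen (U l) := fun l => isOpen_lt hf continuous_const
  have hmono : Monotone U := fun l l' hll' y (hy : f y < l) => hy.trans_le hll'
  have hcover : {y | f y < escapeLevel f A x} ⊆ ⋃ l, U l := fun y hy =>
    let ⟨l, hl, hyl⟩ := exists_lt_of_lt_csSup hne hy
    mem_iUnion.2 ⟨⟨l, hl⟩, hyl⟩
  have hwell : well f A x ⊆ ⋃ l, connectedComponentIn (U l) x :=
    (connectedComponentIn_mono x hcover).trans
      (connectedComponentIn_iUnion_of_directed hopen hmono.directed_le x).subset
  exact (disjoint_iUnion_left.2 fun l => disjoint_iff_inter_eq_empty.2 l.2.2).mono_left hwell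

lemma eq_escapeLevel_of_mem_closure_well [LocallyConnectedSpace X] (hf : Continuous f)
    (hne : (confinedLevels f A x).Nonempty) (hy : y ∈ closure (well f A x)) (hyA : y ∈ A) :
    f y = escapeLevel f A x :=
  (le_of_mem_closure_connectedComponentIn hf hy).eq_of_not_lt fun hlt =>
    disjoint_left.1 (disjoint_well hf hne) (mem_connectedComponentIn_of_mem_closure hy hlt) hyA

lemma sSup_image_closure_well [LocallyConnectedSpace X] [PreconnectedSpace X]
    (hf : Continuous f) (hA : A.Nonempty) (hne : (confinedLevels f A x).Nonempty)
    (hx : f x < escapeLevel f A x) :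
    sSup (f '' closure (well f A x)) = escapeLevel f A x := by
  have hwell : well f A x ≠ univ := fun h =>
    hA.ne_empty (univ_disjoint.1 (h ▸ disjoint_well hf hne))
  exact (isGreatest_image_closure_connectedComponentIn hf hx hwell).csSup_eq

end Well

lemma sInf_image_eq_of_forall_le {X β : Type*} [ConditionallyCompleteLattice β] {f : X → β}
    {s : Set X} {x : X} (hx : x ∈ s) (hmin : ∀ y ∈ s, f x ≤ f y) : sInf (f '' s) = f x :=
  IsLeast.csInf_eq ⟨mem_image_of_mem f hx, forall_mem_image.2 hmin⟩

section Depth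

variable {X : Type*} [TopologicalSpace X]

/-- The depth of the well of `x`: the oscillation of `f` over its closure, as compared in (A1). -/
noncomputable def wellDepth (f : X → ℝ) (A : Set X) (x : X) : ℝ :=
  sSup (f '' closure (well f A x)) - sInf (f '' closure (well f A x))

variable [LocallyConnectedSpace X] [PreconnectedSpace X] {f : X → ℝ} {A : Set X} {x m : X}

lemma wellDepth_le_wellDepth_of_forall_le (hf : Continuous f) (hA : A.Nonempty)
    (hxne : (confinedLevels f A x).Nonempty) (hx : f x < escapeLevel f A x)
    (hmne : (confinedLevels f A m).Nonempty) (hlevel : escapeLevel f A x ≤ escapeLevel f A m)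
    (hmin : ∀ y, f m ≤ f y) : wellDepth f A x ≤ wellDepth f A m := by
  have hm : f m < escapeLevel f A m := (hmin x).trans_lt (hx.trans_le hlevel)
  have hm_inf : sInf (f '' closure (well f A m)) = f m :=
    sInf_image_eq_of_forall_le (subset_closure (mem_well hm)) fun y _ => hmin y
  have hx_inf : f m ≤ sInf (f '' closure (well f A x)) :=
    le_csInf (Nonempty.image f ⟨x, subset_closure (mem_well hx)⟩)
      (forall_mem_image.2 fun y _ => hmin y)
  rw [wellDepth, wellDepth, sSup_image_closure_well hf hA hxne hx,
    sSup_image_closure_well hf hA hmne hm, hm_inf]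
  exact sub_le_sub hlevel hx_inf

lemma mem_well_of_forall_le [CompactSpace X] (hf : Continuous f) (hA : A.Nonempty)
    (hne : (confinedLevels f A x).Nonempty) (hlevel : ∀ a ∈ A, escapeLevel f A x ≤ f a)
    (hdeep : well f A m ≠ well f A x → wellDepth f A m < wellDepth f A x)
    (hmin : ∀ y, f m ≤ f y) : m ∈ well f A x := by
  have hbdd : ∀ y, BddAbove (confinedLevels f A y) :=
    bddAbove_confinedLevels (isCompact_range hf).bddAbove hA
  have hx : f x < escapeLevel f A x := lt_escapeLevel (hbdd x) hne
  have hmem : escapeLevel f A x ∈ confinedLevels f A m :=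
    mem_confinedLevels_of_forall_le ((hmin x).trans_lt hx) hlevel
  have hdepth : wellDepth f A x ≤ wellDepth f A m :=
    wellDepth_le_wellDepth_of_forall_le hf hA hne hx ⟨_, hmem⟩ (le_csSup (hbdd m) hmem) hmin
  have hwell : well f A m = well f A x := by
    by_contra h
    exact (hdeep h).not_ge hdepth
  exact hwell ▸ mem_well (lt_escapeLevel (hbdd m) ⟨_, hmem⟩)

end Depth

theorem stmt11_general {X : Type*} [TopologicalSpace X] [CompactSpace X]
    [LocallyConnectedSpace X] [PreconnectedSpace X] {A : Set X} {f : X → ℝ} (hf : Continuous f)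
    {xstar : X} (hne : (confinedLevels f A xstar).Nonempty)
    (hA1 : ∀ x ∉ A, (∀ y, f x ≤ f y) → well f A x ≠ well f A xstar →
      wellDepth f A x < wellDepth f A xstar)
    (hA2 : (closure (well f A xstar) ∩ A).Nonempty)
    (hA3 : ∀ z ∈ closure (well f A xstar) ∩ A, ∀ w ∈ A, f z ≤ f w) :
    sInf (range f) < sInf (f '' A) ∧
    sInf (f '' well f A xstar) = sInf (range f) ∧
    {y ∈ well f A xstar | ∀ z ∈ well f A xstar, f y ≤ f z} = {y | ∀ z, f y ≤ f z} := by
  obtain ⟨z, hz, hzA⟩ := hA2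
  have hfz : f z = escapeLevel f A xstar := eq_escapeLevel_of_mem_closure_well hf hne hz hzA
  have hzmin : ∀ a ∈ A, f z ≤ f a := hA3 z ⟨hz, hzA⟩
  have hlt : f xstar < f z := hfz ▸ lt_escapeLevel
    (bddAbove_confinedLevels (isCompact_range hf).bddAbove ⟨z, hzA⟩ xstar) hne
  have hglobal : ∀ m, (∀ y, f m ≤ f y) → m ∈ well f A xstar := fun m hm =>
    have hmA : m ∉ A := fun hmA => ((hm xstar).trans_lt hlt).not_ge (hzmin m hmA)
    mem_well_of_forall_le hf ⟨z, hzA⟩ hne (hfz ▸ hzmin) (hA1 m hmA hm) hm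
  obtain ⟨m, hm⟩ : ∃ m, ∀ y, f m ≤ f y := by
    simpa only [isMinOn_univ_iff, mem_univ, true_and] using
      isCompact_univ.exists_isMinOn ⟨xstar, mem_univ xstar⟩ hf.continuousOn
  have hmin_range : sInf (range f) = f m :=
    image_univ ▸ sInf_image_eq_of_forall_le (mem_univ m) fun y _ => hm y
  refine ⟨?_, ?_, ?_⟩
  · rw [hmin_range, sInf_image_eq_of_forall_le hzA hzmin]
    exact (hm xstar).trans_lt hlt
  · rw [hmin_range, sInf_image_eq_of_forall_le (hglobal m hm) fun y _ => hm y]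
  · ext y
    exact ⟨fun ⟨_, hy⟩ w => (hy m (hglobal m hm)).trans (hm w),
      fun hy => ⟨hglobal y hy, fun w _ => hy w⟩⟩

/-- Lemma 3.13 of the paper: under assumptions (A1), (A2), (A3), the global minimum of `f`
lies strictly below `min_A f`, the minimum of `f` over the principal well `C(x*)` is the
global minimum, and the minimizers of `f` over `C(x*)` are exactly the global minimizers. -/
theorem stmt11 {X : Type*} [TopologicalSpace X] [CompactSpace X] [T2Space X]
    [LocallyConnectedSpace X] [ConnectedSpace X]
    (A : Set X) (hAne : A.Nonempty) (hAclosed : IsClosed A)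
    (f : X → ℝ) (hf : Continuous f)
    (U₀ : Set X) (hU₀ : U₀ = {x | x ∉ A ∧ IsLocalMin f x}) (hU₀ne : U₀.Nonempty)
    (Λ : X → Set ℝ)
    (hΛ : ∀ x, Λ x = {l : ℝ | f x < l ∧ connectedComponentIn {y | f y < l} x ∩ A = ∅})
    (hΛne : ∀ x ∈ U₀, (Λ x).Nonempty)
    (C : X → Set X) (hC : ∀ x, C x = connectedComponentIn {y | f y < sSup (Λ x)} x)
    (xstar : X) (hxstar : xstar ∈ U₀)
    (hA1 : ∀ x ∈ U₀, C x ≠ C xstar →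
      sSup (f '' closure (C x)) - sInf (f '' closure (C x)) <
        sSup (f '' closure (C xstar)) - sInf (f '' closure (C xstar)))
    (hA2 : (closure (C xstar) ∩ A).Nonempty)
    (hA3 : ∀ z ∈ closure (C xstar) ∩ A, ∀ w ∈ A, f z ≤ f w) :
    sInf (Set.range f) < sInf (f '' A) ∧
    sInf (f '' C xstar) = sInf (Set.range f) ∧
    {y ∈ C xstar | ∀ z ∈ C xstar, f y ≤ f z} = {y | ∀ z, f y ≤ f z} := by
  obtain rfl : Λ = confinedLevels f A := funext hΛ
  obtain rfl : C = well f A := funext hC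
  subst hU₀
  exact stmt11_general hf (hΛne xstar hxstar)
    (fun x hxA hx => hA1 x ⟨hxA, Filter.Eventually.of_forall hx⟩) hA2 hA3
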